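/- arXiv:2205.14208 — 8 statements merged into one kernel-verified Lean document; each statement's English description precedes it below -/
import Mathlib

section
/- (Theorem 2.1, TAD acquisition function.) The expectation of the predictive log-likelihood L_P of the target under the data-predictive moments has the closed form: ∫ L_P(g₂) dν(g₂) = −(1/2)·log det Q^{(f|1+2)} − (1/2)·(f_T − p^{(f|1)})ᵀ (Q^{(f|1+2)})⁻¹ (f_T − p^{(f|1)}) − (1/2)·Trace( A (Q^{(2|1)})⁻¹ Aᵀ (Q^{(f|1+2)})⁻¹ ), where A := K_x2 − K_x1 (K_11+Σ_1)⁻¹ K_12. -/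
open Matrix MeasureTheory

/-!
Write `F` for the predictive mean `p^{(f|1+2)}` as a random function of the second data set.
Block inversion shows that conditioning on both data sets at once is the same as conditioning on
the first and then updating by the second with gain `A (Q^{(2|1)})⁻¹`. So `F` is an affine image of
a random vector with mean `p^{(2|1)}` and covariance `Q^{(2|1)}`: its mean is `p^{(f|1)}` and its
covariance is `A (Q^{(2|1)})⁻¹ Aᵀ`. The trace term is then the bias-variance decomposition
`E[(f - F)ᵀ P (f - F)] = (f - E F)ᵀ P (f - E F) + Trace(Cov F P)`.
-/

section Conditioning

variable {R a b c d : Type*} [CommRing R] [Fintype b] [Fintype c] [DecidableEq b] [DecidableEq c]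

/-- The posterior mean of a Gaussian vector with prior mean `μ`, given that data of covariance `G`,
whose cross-covariance with the vector is `K`, deviate from their prior mean by `r`. -/
noncomputable def posteriorMean (μ : a → R) (K : Matrix a b R) (G : Matrix b b R) (r : b → R) :
    a → R :=
  μ + (K * G⁻¹) *ᵥ r

/-- The posterior cross-covariance of two Gaussian vectors with prior cross-covariance `K`, given
data of covariance `G`; the cross-covariances with the data are `L` (first vector against data) and
`M` (data against second vector). The matrix is the Schur complement of `G`. -/
noncomputable def posteriorCov (K : Matrix a d R) (L : Matrix a b R) (G : Matrix b b R)
    (M : Matrix b d R) : Matrix a d R :=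
  K - L * G⁻¹ * M

variable {G : Matrix b b R} {B : Matrix b c R} {E : Matrix c b R} {H : Matrix c c R}

theorem fromCols_mul_inv_fromBlocks (K : Matrix a b R) (L : Matrix a c R)
    (hG : IsUnit G) (hQ : IsUnit (posteriorCov H E G B)) :
    fromCols K L * (fromBlocks G B E H)⁻¹ =
      fromCols ((K - posteriorCov L K G B * (posteriorCov H E G B)⁻¹ * E) * G⁻¹)
        (posteriorCov L K G B * (posteriorCov H E G B)⁻¹) := by
  set Y := posteriorCov L K G B * (posteriorCov H E G B)⁻¹
  let := hG.invertible
  have hΓ : IsUnit (fromBlocks G B E H) := by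
    rwa [isUnit_fromBlocks_iff_of_invertible₁₁, invOf_eq_nonsing_inv]
  let := hΓ.invertible
  have first_block : (K - Y * E) * G⁻¹ * G + Y * E = K := by
    rw [inv_mul_cancel_right_of_invertible, sub_add_cancel]
  have gain_mul : Y * (H - E * G⁻¹ * B) = L - K * G⁻¹ * B := by
    let := hQ.invertible
    exact inv_mul_cancel_right_of_invertible _ _
  have second_block : (K - Y * E) * G⁻¹ * B + Y * H = L := by
    calc (K - Y * E) * G⁻¹ * B + Y * H = K * G⁻¹ * B + Y * (H - E * G⁻¹ * B) := by
          simp only [Matrix.mul_sub, Matrix.sub_mul, Matrix.mul_assoc]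
          abel
      _ = L := by rw [gain_mul, add_sub_cancel]
  rw [mul_inv_eq_iff_eq_mul_of_invertible, fromCols_mul_fromBlocks, first_block, second_block]

theorem posteriorMean_fromBlocks (μ : a → R) (ν : c → R) (K : Matrix a b R) (L : Matrix a c R)
    (hG : IsUnit G) (hQ : IsUnit (posteriorCov H E G B)) (r : b → R) (y : c → R) :
    posteriorMean μ (fromCols K L) (fromBlocks G B E H) (Sum.elim r (y - ν)) =
      posteriorMean (posteriorMean μ K G r) (posteriorCov L K G B) (posteriorCov H E G B)
        (y - posteriorMean ν E G r) := by
  simp only [posteriorMean, fromCols_mul_inv_fromBlocks K L hG hQ, fromCols_mulVec_sumElim,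
    Matrix.sub_mul, sub_mulVec, mulVec_sub, mulVec_add, mulVec_mulVec, Matrix.mul_assoc]
  abel

end Conditioning

section RandomVector

open ProbabilityTheory

variable {Ω ι κ : Type*} {mΩ : MeasurableSpace Ω} {μ : Measure Ω} {X : Ω → ι → ℝ}

/-- The covariance matrix of a random vector. -/
noncomputable def covMatrix (X : Ω → ι → ℝ) (μ : Measure Ω) : Matrix ι ι ℝ :=
  of fun i j ↦ cov[fun ω ↦ X ω i, fun ω ↦ X ω j; μ]

theorem transpose_covMatrix : (covMatrix X μ)ᵀ = covMatrix X μ := by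
  ext i j
  exact covariance_comm _ _

theorem covMatrix_eq_of_centered_moments {m : ι → ℝ} {C : Matrix ι ι ℝ}
    (hmean : ∀ i, ∫ ω, X ω i ∂μ = m i)
    (hcov : ∀ i j, ∫ ω, (X ω i - m i) * (X ω j - m j) ∂μ = C i j) : covMatrix X μ = C := by
  ext i j
  simp only [covMatrix, of_apply, covariance, hmean, hcov]

variable [Fintype ι]

theorem memLp_two_of_integrable_mul_self (hX : ∀ i, Integrable (fun ω ↦ X ω i) μ)
    (hXX : ∀ i, Integrable (fun ω ↦ X ω i * X ω i) μ) : MemLp X 2 μ :=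
  MemLp.of_eval fun i ↦ (memLp_two_iff_integrable_sq (hX i).aestronglyMeasurable).2 <| by
    simpa only [sq] using hXX i

theorem memLp_add_mulVec_sub [Fintype κ] [IsFiniteMeasure μ] {p : ENNReal} (hX : MemLp X p μ)
    (v : κ → ℝ) (M : Matrix κ ι ℝ) (w : ι → ℝ) : MemLp (fun ω ↦ v + M *ᵥ (X ω - w)) p μ :=
  (memLp_const v).add <|
    M.mulVecLin.toContinuousLinearMap.comp_memLp' (hX.sub (memLp_const w))

theorem integrable_dotProduct_mulVec (hX : MemLp X 2 μ) (M : Matrix ι ι ℝ) :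
    Integrable (fun ω ↦ X ω ⬝ᵥ M *ᵥ X ω) μ := by
  simp only [dotProduct, mulVec, Finset.mul_sum]
  exact integrable_finsetSum _ fun i _ ↦ integrable_finsetSum _ fun j _ ↦
    (hX.eval i).integrable_mul ((hX.eval j).const_mul (M i j))

variable [IsProbabilityMeasure μ]

theorem integral_add_mulVec_sub [Fintype κ] (hX : Integrable X μ) (v : κ → ℝ) (M : Matrix κ ι ℝ)
    (w : ι → ℝ) : ∫ ω, (v + M *ᵥ (X ω - w)) ∂μ = v + M *ᵥ (∫ ω, X ω ∂μ - w) := by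
  let L := M.mulVecLin.toContinuousLinearMap
  have hXw : Integrable (fun ω ↦ X ω - w) μ := hX.sub (integrable_const w)
  have integral_mulVec : ∫ ω, M *ᵥ (X ω - w) ∂μ = M *ᵥ ∫ ω, (X ω - w) ∂μ :=
    L.integral_comp_comm hXw
  have hMX : Integrable (fun ω ↦ M *ᵥ (X ω - w)) μ := L.integrable_comp hXw
  rw [integral_add (integrable_const v) hMX, integral_mulVec,
    integral_sub hX (integrable_const w)]
  simp only [integral_const, probReal_univ, one_smul]

theorem covMatrix_add_mulVec_sub (hX : MemLp X 2 μ) (v : κ → ℝ) (M : Matrix κ ι ℝ) (w : ι → ℝ) :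
    covMatrix (fun ω ↦ v + M *ᵥ (X ω - w)) μ = M * covMatrix X μ * Mᵀ := by
  have hXw (i : ι) : MemLp (fun ω ↦ X ω i - w i) 2 μ := (hX.eval i).sub (memLp_const _)
  have hterm (k : κ) (i : ι) : MemLp (fun ω ↦ M k i * (X ω i - w i)) 2 μ := (hXw i).const_mul _
  have hsum (k : κ) : Integrable (fun ω ↦ ∑ i, M k i * (X ω i - w i)) μ :=
    integrable_finsetSum _ fun i _ ↦ (hterm k i).integrable one_le_two
  have hX_int (i : ι) : Integrable (fun ω ↦ X ω i) μ := (hX.eval i).integrable one_le_two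
  ext k l
  simp only [covMatrix, of_apply, Pi.add_apply, mulVec, dotProduct, Pi.sub_apply, mul_apply,
    transpose_apply, Finset.sum_mul]
  rw [covariance_const_add_left (hsum k), covariance_const_add_right (hsum l),
    covariance_fun_sum_fun_sum (hterm k) (hterm l), Finset.sum_comm]
  refine Finset.sum_congr rfl fun j _ ↦ Finset.sum_congr rfl fun i _ ↦ ?_
  rw [covariance_const_mul_left, covariance_const_mul_right, covariance_sub_const_left (hX_int i),
    covariance_sub_const_right (hX_int j)]
  ring

theorem integral_dotProduct_mulVec (hX : MemLp X 2 μ) (M : Matrix ι ι ℝ) :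
    ∫ ω, X ω ⬝ᵥ M *ᵥ X ω ∂μ =
      (∫ ω, X ω ∂μ) ⬝ᵥ M *ᵥ (∫ ω, X ω ∂μ) + (covMatrix X μ * M).trace := by
  have eval_mean (i : ι) : (∫ ω, X ω ∂μ) i = ∫ ω, X ω i ∂μ :=
    eval_integral (fun j ↦ (hX.eval j).integrable one_le_two) i
  have hprod (i j : ι) : Integrable (fun ω ↦ M i j * (X ω i * X ω j)) μ :=
    ((hX.eval i).integrable_mul (hX.eval j)).const_mul _
  have second_moment (i j : ι) : ∫ ω, X ω i * X ω j ∂μ =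
      (∫ ω, X ω ∂μ) i * (∫ ω, X ω ∂μ) j + covMatrix X μ i j := by
    rw [eval_mean, eval_mean, covMatrix, of_apply, covariance_eq_sub (hX.eval i) (hX.eval j)]
    exact (add_sub_cancel _ _).symm
  calc ∫ ω, X ω ⬝ᵥ M *ᵥ X ω ∂μ
      = ∫ ω, ∑ i, ∑ j, M i j * (X ω i * X ω j) ∂μ := by
        simp only [dotProduct, mulVec, Finset.mul_sum, mul_left_comm]
    _ = ∑ i, ∑ j, M i j * ∫ ω, X ω i * X ω j ∂μ := by
        rw [integral_finsetSum _ fun i _ ↦ integrable_finsetSum _ fun j _ ↦ hprod i j]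
        simp only [integral_finsetSum _ fun j _ ↦ hprod _ j, integral_const_mul]
    _ = (∫ ω, X ω ∂μ) ⬝ᵥ M *ᵥ (∫ ω, X ω ∂μ) + ((covMatrix X μ)ᵀ * M).trace := by
        simp only [second_moment, mul_add, Finset.sum_add_distrib, dotProduct, mulVec,
          Finset.mul_sum, mul_left_comm, trace, diag, mul_apply, transpose_apply]
        congr 1
        rw [Finset.sum_comm]
        simp only [mul_comm]
    _ = _ := by rw [transpose_covMatrix]

theorem integral_const_sub_dotProduct_mulVec (hX : MemLp X 2 μ) (M : Matrix ι ι ℝ) (v : ι → ℝ) :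
    ∫ ω, (v - X ω) ⬝ᵥ M *ᵥ (v - X ω) ∂μ =
      (v - ∫ ω, X ω ∂μ) ⬝ᵥ M *ᵥ (v - ∫ ω, X ω ∂μ) + (covMatrix X μ * M).trace := by
  classical
  have reflect (x : ι → ℝ) : v - x = v + (-1 : Matrix ι ι ℝ) *ᵥ (x - 0) := by
    rw [sub_zero, neg_mulVec, one_mulVec, sub_eq_add_neg]
  simp only [reflect]
  rw [integral_dotProduct_mulVec (memLp_add_mulVec_sub hX v (-1) 0),
    integral_add_mulVec_sub (hX.integrable one_le_two), covMatrix_add_mulVec_sub hX]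
  simp only [transpose_neg, transpose_one, neg_one_mul, mul_neg_one, neg_neg]

variable [DecidableEq ι]

theorem integral_posteriorMean [Fintype κ] (hX : Integrable X μ) (m : κ → ℝ)
    (K : Matrix κ ι ℝ) (G : Matrix ι ι ℝ) :
    ∫ ω, posteriorMean m K G (X ω - ∫ ω', X ω' ∂μ) ∂μ = m := by
  simp only [posteriorMean, integral_add_mulVec_sub hX, sub_self, mulVec_zero, add_zero]

theorem covMatrix_posteriorMean (hX : MemLp X 2 μ) (hC : IsUnit (covMatrix X μ)) (m : κ → ℝ)
    (K : Matrix κ ι ℝ) (w : ι → ℝ) :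
    covMatrix (fun ω ↦ posteriorMean m K (covMatrix X μ) (X ω - w)) μ =
      K * (covMatrix X μ)⁻¹ * Kᵀ := by
  let := hC.invertible
  simp only [posteriorMean]
  rw [covMatrix_add_mulVec_sub hX, inv_mul_cancel_right_of_invertible, transpose_mul,
    transpose_nonsing_inv, transpose_covMatrix, Matrix.mul_assoc]

end RandomVector

/-- In the paper's notation `G = K_11 + Σ_1`, `H = K_22 + Σ_2`, `r = g_1 - μ_1`, `X` is the second
data set `g_2` as a random vector, `P` is the precision matrix `(Q^{(f|1+2)})⁻¹` and `ℓ` is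
the log-determinant term. -/
theorem TAD_acquisition_function_general
    {Ω a b c : Type*} [Fintype a] [Fintype b] [Fintype c] [DecidableEq b] [DecidableEq c]
    {mΩ : MeasurableSpace Ω} {ν : Measure Ω} [IsProbabilityMeasure ν]
    (Kx1 : Matrix a b ℝ) (Kx2 : Matrix a c ℝ) {G : Matrix b b ℝ} {K12 : Matrix b c ℝ}
    {K21 : Matrix c b ℝ} {H : Matrix c c ℝ} (hG : IsUnit G)
    (hQ : IsUnit (posteriorCov H K21 G K12))
    (μx : a → ℝ) (μ2 : c → ℝ) (r : b → ℝ) (fT : a → ℝ) (P : Matrix a a ℝ) (ℓ : ℝ)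
    {X : Ω → c → ℝ} (hX : MemLp X 2 ν) (hmean : ∫ ω, X ω ∂ν = posteriorMean μ2 K21 G r)
    (hcov : covMatrix X ν = posteriorCov H K21 G K12) {F : Ω → a → ℝ}
    (hF : ∀ ω, F ω = posteriorMean μx (fromCols Kx1 Kx2) (fromBlocks G K12 K21 H)
      (Sum.elim r (X ω - μ2))) :
    ∫ ω, (ℓ - (1/2) * ((fT - F ω) ⬝ᵥ P *ᵥ (fT - F ω))) ∂ν =
      ℓ - (1/2) * ((fT - posteriorMean μx Kx1 G r) ⬝ᵥ P *ᵥ (fT - posteriorMean μx Kx1 G r))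
        - (1/2) * (posteriorCov Kx2 Kx1 G K12 * (posteriorCov H K21 G K12)⁻¹ *
          (posteriorCov Kx2 Kx1 G K12)ᵀ * P).trace := by
  set f₁ := posteriorMean μx Kx1 G r
  set A := posteriorCov Kx2 Kx1 G K12
  have sequential : F = fun ω ↦ posteriorMean f₁ A (covMatrix X ν) (X ω - ∫ ω', X ω' ∂ν) := by
    ext1 ω
    rw [hF, posteriorMean_fromBlocks _ _ _ _ hG hQ, hmean, hcov]
  have F_memLp : MemLp F 2 ν := sequential ▸ memLp_add_mulVec_sub hX _ _ _
  have F_mean : ∫ ω, F ω ∂ν = f₁ := by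
    simp only [sequential, integral_posteriorMean (hX.integrable one_le_two)]
  have F_cov : covMatrix F ν = A * (posteriorCov H K21 G K12)⁻¹ * Aᵀ := by
    rw [sequential, covMatrix_posteriorMean hX (hcov ▸ hQ), hcov]
  have quad_integrable : Integrable (fun ω ↦ (fT - F ω) ⬝ᵥ P *ᵥ (fT - F ω)) ν :=
    integrable_dotProduct_mulVec ((memLp_const fT).sub F_memLp) P
  rw [integral_sub (integrable_const ℓ) (quad_integrable.const_mul _), integral_const_mul,
    integral_const_sub_dotProduct_mulVec F_memLp, F_mean, F_cov, integral_const, probReal_univ,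
    one_smul]
  ring

/-- Theorem 2.1 (TAD acquisition function): the expectation of the predictive
log-likelihood of the target under the data-predictive moments has the closed form
`∫ L_P dν = −(1/2)·log det Q^{(f|1+2)} − (1/2)·(f_T − p^{(f|1)})ᵀ(Q^{(f|1+2)})⁻¹(f_T − p^{(f|1)})
 − (1/2)·Tr(A (Q^{(2|1)})⁻¹ Aᵀ (Q^{(f|1+2)})⁻¹)`, with `A := K_x2 − K_x1(K_11+Σ_1)⁻¹K_12`. -/
theorem TAD_acquisition_function
    {a b c : Type*} [Fintype a] [Fintype b] [Fintype c]
    [DecidableEq a] [DecidableEq b] [DecidableEq c]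
    [Nonempty a] [Nonempty b] [Nonempty c]
    (Kxx : Matrix a a ℝ) (Kx1 : Matrix a b ℝ) (Kx2 : Matrix a c ℝ)
    (K11 : Matrix b b ℝ) (K12 : Matrix b c ℝ) (K22 : Matrix c c ℝ)
    (S1 : Matrix b b ℝ) (S2 : Matrix c c ℝ)
    (h1 : IsUnit (K11 + S1))
    (Q21 : Matrix c c ℝ)
    (hQ21 : Q21 = K22 + S2 - K12ᵀ * (K11 + S1)⁻¹ * K12)
    (h2 : IsUnit Q21)
    (Γ : Matrix (b ⊕ c) (b ⊕ c) ℝ)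
    (hΓ : Γ = fromBlocks (K11 + S1) K12 K12ᵀ (K22 + S2))
    (μx : a → ℝ) (μ1 : b → ℝ) (μ2 : c → ℝ) (g1 : b → ℝ) (fT : a → ℝ)
    (pf1 : a → ℝ)
    (hpf1 : pf1 = μx + (Kx1 * (K11 + S1)⁻¹).mulVec (g1 - μ1))
    (p21 : c → ℝ)
    (hp21 : p21 = μ2 + (K12ᵀ * (K11 + S1)⁻¹).mulVec (g1 - μ1))
    (pf12 : (c → ℝ) → (a → ℝ))
    (hpf12 : ∀ g2, pf12 g2
      = μx + (fromCols Kx1 Kx2 * Γ⁻¹).mulVec (Sum.elim (g1 - μ1) (g2 - μ2)))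
    (Qf12 : Matrix a a ℝ)
    (hQf12 : Qf12 = Kxx - fromCols Kx1 Kx2 * Γ⁻¹ * fromRows Kx1ᵀ Kx2ᵀ)
    (hQf12pd : Qf12.PosDef)
    (LP : (c → ℝ) → ℝ)
    (hLP : ∀ g2, LP g2
      = -(1/2) * Real.log Qf12.det
        - (1/2) * ((fT - pf12 g2) ⬝ᵥ (Qf12⁻¹).mulVec (fT - pf12 g2)))
    (A : Matrix a c ℝ)
    (hA : A = Kx2 - Kx1 * (K11 + S1)⁻¹ * K12)
    (ν : Measure (c → ℝ)) [IsProbabilityMeasure ν]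
    (hint1 : ∀ i, Integrable (fun g2 => g2 i) ν)
    (hint2 : ∀ i j, Integrable (fun g2 => g2 i * g2 j) ν)
    (hmean : ∀ i, ∫ g2, g2 i ∂ν = p21 i)
    (hcov : ∀ i j, ∫ g2, (g2 i - p21 i) * (g2 j - p21 j) ∂ν = Q21 i j) :
    ∫ g2, LP g2 ∂ν
      = -(1/2) * Real.log Qf12.det
        - (1/2) * ((fT - pf1) ⬝ᵥ (Qf12⁻¹).mulVec (fT - pf1))
        - (1/2) * (A * Q21⁻¹ * Aᵀ * Qf12⁻¹).trace := by
  subst hQ21 hΓ hpf1 hp21 hA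
  simp only [hLP]
  exact TAD_acquisition_function_general Kx1 Kx2 h1 h2 μx μ2 (g1 - μ1) fT Qf12⁻¹ _
    (memLp_two_of_integrable_mul_self hint1 fun i ↦ hint2 i i)
    (funext fun i ↦ (eval_integral hint1 i).trans (hmean i))
    (covMatrix_eq_of_centered_moments hmean hcov) hpf12
end

section
/- (Theorem 2.2, update form of the predictive covariance.) Q^{(f|1+2)} = Q^{(f|1)} − (K_x2 − K_x1(K_11+Σ_1)⁻¹K_12) · (Q^{(2|1)})⁻¹ · (K_2x − K_21(K_11+Σ_1)⁻¹K_1x). -/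
open Matrix

/-!
The conditional covariances `Q^{(f|1)}`, `Q^{(2|1)}` and `Q^{(f|1+2)}` are Schur complements in the
joint covariance matrix of predictions and data, so the update is the Crabtree–Haynsworth quotient
formula: eliminating `1` and `2` together equals eliminating `1`, then eliminating `2` from what
remains. Solving `Γ * fromRows Z₁ Z₂ = fromRows X₁ X₂` by block Gaussian elimination avoids writing
out `Γ⁻¹`: the Schur complement determines `Z₂`, and back substitution determines `Z₁`.
-/

section SchurComplement

variable {R l m n p q : Type*} [CommRing R] [Fintype m] [DecidableEq m]

/-- The Schur complement of `A` in the block matrix `fromBlocks A B C D`: for a covariance matrix,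
what remains of `D` after conditioning on the variables of `A`. Neither `D` nor the block matrix has
to be square, so that conditional cross-covariances are covered. `A⁻¹` is the nonsingular inverse,
which is `0` when `A` is not invertible. -/
noncomputable def schurComplement (A : Matrix m m R) (B : Matrix m q R) (C : Matrix p m R)
    (D : Matrix p q R) : Matrix p q R :=
  D - C * A⁻¹ * B

variable [Fintype n]

lemma mul_inv_mul_sub_add_mul (A : Matrix m m R) (B : Matrix m n R) (C : Matrix l m R)
    (D : Matrix l n R) (X : Matrix m q R) (Z : Matrix n q R) :
    C * (A⁻¹ * (X - B * Z)) + D * Z = schurComplement A B C D * Z + C * A⁻¹ * X := by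
  simp only [schurComplement, Matrix.mul_sub, Matrix.sub_mul, Matrix.mul_assoc]
  abel

lemma fromBlocks_mul_fromRows_eq_iff {A : Matrix m m R} (hA : IsUnit A) (B : Matrix m n R)
    (C : Matrix l m R) (D : Matrix l n R) (Z₁ : Matrix m q R) (Z₂ : Matrix n q R)
    (X₁ : Matrix m q R) (X₂ : Matrix l q R) :
    fromBlocks A B C D * fromRows Z₁ Z₂ = fromRows X₁ X₂ ↔
      Z₁ = A⁻¹ * (X₁ - B * Z₂) ∧ schurComplement A B C D * Z₂ = schurComplement A X₁ C X₂ := by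
  have back_substitution : A * Z₁ + B * Z₂ = X₁ ↔ Z₁ = A⁻¹ * (X₁ - B * Z₂) := by
    let := hA.invertible
    rw [← eq_sub_iff_add_eq, eq_comm (a := Z₁), inv_mul_eq_iff_eq_mul_of_invertible, eq_comm]
  have elimination : C * (A⁻¹ * (X₁ - B * Z₂)) + D * Z₂ = X₂ ↔
      schurComplement A B C D * Z₂ = schurComplement A X₁ C X₂ := by
    rw [mul_inv_mul_sub_add_mul, ← eq_sub_iff_add_eq, ← schurComplement]
  rw [fromBlocks_mul_fromRows, fromRows_ext_iff, back_substitution]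
  exact and_congr_right fun hZ₁ => hZ₁ ▸ elimination

variable [DecidableEq n]

lemma isUnit_fromBlocks_of_isUnit_schurComplement {A : Matrix m m R} {B : Matrix m n R}
    {C : Matrix n m R} {D : Matrix n n R} (hA : IsUnit A)
    (hS : IsUnit (schurComplement A B C D)) : IsUnit (fromBlocks A B C D) := by
  let := hA.invertible
  rwa [isUnit_fromBlocks_iff_of_invertible₁₁, invOf_eq_nonsing_inv]

lemma inv_fromBlocks_mul_fromRows {A : Matrix m m R} {B : Matrix m n R} {C : Matrix n m R}
    {D : Matrix n n R} (hA : IsUnit A) (hS : IsUnit (schurComplement A B C D))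
    (X₁ : Matrix m q R) (X₂ : Matrix n q R) :
    (fromBlocks A B C D)⁻¹ * fromRows X₁ X₂ =
      fromRows (A⁻¹ * (X₁ - B * ((schurComplement A B C D)⁻¹ * schurComplement A X₁ C X₂)))
        ((schurComplement A B C D)⁻¹ * schurComplement A X₁ C X₂) := by
  let := (isUnit_fromBlocks_of_isUnit_schurComplement hA hS).invertible
  rw [inv_mul_eq_iff_eq_mul_of_invertible, eq_comm, fromBlocks_mul_fromRows_eq_iff hA]
  exact ⟨rfl, mul_nonsing_inv_cancel_left _ _ ((isUnit_iff_isUnit_det _).mp hS)⟩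

theorem predictive_covariance_update_general {A : Matrix m m R} {B : Matrix m n R}
    {C : Matrix n m R} {D : Matrix n n R} (hA : IsUnit A) (hS : IsUnit (schurComplement A B C D))
    (X₁ : Matrix m q R) (X₂ : Matrix n q R) (U₁ : Matrix p m R) (U₂ : Matrix p n R)
    (P : Matrix p q R) :
    schurComplement (fromBlocks A B C D) (fromRows X₁ X₂) (fromCols U₁ U₂) P =
      schurComplement (schurComplement A B C D) (schurComplement A X₁ C X₂)
        (schurComplement A B U₁ U₂) (schurComplement A X₁ U₁ P) := by
  set Z₂ := (schurComplement A B C D)⁻¹ * schurComplement A X₁ C X₂ with hZ₂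
  calc schurComplement (fromBlocks A B C D) (fromRows X₁ X₂) (fromCols U₁ U₂) P
    _ = P - fromCols U₁ U₂ * fromRows (A⁻¹ * (X₁ - B * Z₂)) Z₂ := by
      rw [schurComplement, Matrix.mul_assoc, inv_fromBlocks_mul_fromRows hA hS]
    _ = P - (schurComplement A B U₁ U₂ * Z₂ + U₁ * A⁻¹ * X₁) := by
      rw [fromCols_mul_fromRows, mul_inv_mul_sub_add_mul]
    _ = schurComplement A X₁ U₁ P - schurComplement A B U₁ U₂ * Z₂ := by
      rw [sub_add_eq_sub_sub_swap, ← schurComplement]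
    _ = _ := by rw [hZ₂, ← Matrix.mul_assoc, ← schurComplement]

end SchurComplement

/-- Theorem 2.2 (update form of the predictive covariance):
`Q^{(f|1+2)} = Q^{(f|1)} − (K_x2 − K_x1(K_11+Σ_1)⁻¹K_12)·(Q^{(2|1)})⁻¹·(K_2x − K_21(K_11+Σ_1)⁻¹K_1x)`. -/
theorem predictive_covariance_update
    {a b c : Type*} [Fintype a] [Fintype b] [Fintype c]
    [DecidableEq a] [DecidableEq b] [DecidableEq c]
    [Nonempty a] [Nonempty b] [Nonempty c]
    (Kxx : Matrix a a ℝ) (Kx1 : Matrix a b ℝ) (Kx2 : Matrix a c ℝ)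
    (K11 : Matrix b b ℝ) (K12 : Matrix b c ℝ) (K22 : Matrix c c ℝ)
    (S1 : Matrix b b ℝ) (S2 : Matrix c c ℝ)
    (h1 : IsUnit (K11 + S1))
    (h2 : IsUnit (K22 + S2 - K12ᵀ * (K11 + S1)⁻¹ * K12)) :
    Kxx - fromCols Kx1 Kx2 * (fromBlocks (K11 + S1) K12 K12ᵀ (K22 + S2))⁻¹
        * fromRows Kx1ᵀ Kx2ᵀ
      = (Kxx - Kx1 * (K11 + S1)⁻¹ * Kx1ᵀ)
        - (Kx2 - Kx1 * (K11 + S1)⁻¹ * K12)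
          * (K22 + S2 - K12ᵀ * (K11 + S1)⁻¹ * K12)⁻¹
          * (Kx2ᵀ - K12ᵀ * (K11 + S1)⁻¹ * Kx1ᵀ) :=
  predictive_covariance_update_general h1 h2 Kx1ᵀ Kx2ᵀ Kx1 Kx2 Kxx
end

section
/- (Gaussian prediction update lemma, part (i): mean update.) p^{(f|1+2)} = p^{(f|1)} + (C_f2 − C_f1·C_11⁻¹·C_12) · (Q^{(2|1)})⁻¹ · (g_2 − p^{(2|1)}). -/
open Matrix

/-!
The joint weights `[X Y] * Γ⁻¹`, for `Γ = [A B; C D]` with Schur complement `S = D - C * A⁻¹ * B`,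
are the unique solution `W` of `W * Γ = [X Y]`. Block elimination solves this system by
`W = [X * A⁻¹ - K * (C * A⁻¹), K]`, where the gain `K` is determined by
`K * S = Y - X * A⁻¹ * B`. Applied to residuals `(u, v)`, these weights give
`X * A⁻¹ * u + K * (v - C * A⁻¹ * u)`: the gain acts on the innovation, the part of `v` not already
predicted from `u`.
-/

section BlockElimination

variable {R a b c d : Type*} [Fintype b] [Fintype c]

theorem fromCols_sub_mul_mulVec_sumElim [Ring R] (P : Matrix a b R) (K : Matrix a c R)
    (L : Matrix c b R) (u : b → R) (v : c → R) :
    fromCols (P - K * L) K *ᵥ Sum.elim u v = P *ᵥ u + K *ᵥ (v - L *ᵥ u) := by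
  rw [fromCols_mulVec_sumElim, sub_mulVec, mulVec_sub, mulVec_mulVec]
  abel

variable [CommRing R] [DecidableEq b]

theorem fromCols_mul_fromBlocks_of_mul_schur_eq {A : Matrix b b R} {B : Matrix b d R}
    {C : Matrix c b R} {D : Matrix c d R} {X : Matrix a b R} {Y : Matrix a d R} {K : Matrix a c R}
    (hA : IsUnit A) (hK : K * (D - C * A⁻¹ * B) = Y - X * A⁻¹ * B) :
    fromCols (X * A⁻¹ - K * (C * A⁻¹)) K * fromBlocks A B C D = fromCols X Y := by
  have hA' : IsUnit A.det := A.isUnit_iff_isUnit_det.mp hA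
  have hleft : (X * A⁻¹ - K * (C * A⁻¹)) * A + K * C = X := by
    rw [Matrix.sub_mul, ← Matrix.mul_assoc K, nonsing_inv_mul_cancel_right _ _ hA',
      nonsing_inv_mul_cancel_right _ _ hA', sub_add_cancel]
  have hright : (X * A⁻¹ - K * (C * A⁻¹)) * B + K * D = Y :=
    calc
      (X * A⁻¹ - K * (C * A⁻¹)) * B + K * D
          = X * A⁻¹ * B + K * (D - C * A⁻¹ * B) := by
        rw [Matrix.sub_mul, Matrix.mul_sub, Matrix.mul_assoc K]
        abel
      _ = Y := by rw [hK, add_sub_cancel]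
  rw [fromCols_mul_fromBlocks, hleft, hright]

variable [DecidableEq c] {A : Matrix b b R} {B : Matrix b c R} {C : Matrix c b R}
  {D : Matrix c c R}

theorem isUnit_fromBlocks_of_isUnit_schur (hA : IsUnit A) (hS : IsUnit (D - C * A⁻¹ * B)) :
    IsUnit (fromBlocks A B C D) := by
  cases hA.nonempty_invertible
  rw [← invOf_eq_nonsing_inv] at hS
  exact isUnit_fromBlocks_iff_of_invertible₁₁.mpr hS

theorem fromCols_mul_inv_fromBlocks_s3 (X : Matrix a b R) (Y : Matrix a c R) (hA : IsUnit A)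
    (hS : IsUnit (D - C * A⁻¹ * B)) :
    fromCols X Y * (fromBlocks A B C D)⁻¹ =
      fromCols (X * A⁻¹ - (Y - X * A⁻¹ * B) * (D - C * A⁻¹ * B)⁻¹ * (C * A⁻¹))
        ((Y - X * A⁻¹ * B) * (D - C * A⁻¹ * B)⁻¹) := by
  have hΓ := isUnit_fromBlocks_of_isUnit_schur hA hS
  have hgain : (Y - X * A⁻¹ * B) * (D - C * A⁻¹ * B)⁻¹ * (D - C * A⁻¹ * B) = Y - X * A⁻¹ * B :=
    nonsing_inv_mul_cancel_right _ _ ((isUnit_iff_isUnit_det _).mp hS)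
  rw [← fromCols_mul_fromBlocks_of_mul_schur_eq hA hgain]
  exact mul_nonsing_inv_cancel_right _ _ ((isUnit_iff_isUnit_det _).mp hΓ)

end BlockElimination

theorem gaussian_prediction_update_mean_general
    {R a b c : Type*} [CommRing R] [Fintype b] [Fintype c] [DecidableEq b] [DecidableEq c]
    (Cf1 : Matrix a b R) (Cf2 : Matrix a c R)
    (C11 : Matrix b b R) (C12 : Matrix b c R) (C21 : Matrix c b R) (C22 : Matrix c c R)
    (h1 : IsUnit C11)
    (h2 : IsUnit (C22 - C21 * C11⁻¹ * C12))
    (m : a → R) (m1 g1 : b → R) (m2 g2 : c → R) :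
    m + (fromCols Cf1 Cf2 * (fromBlocks C11 C12 C21 C22)⁻¹).mulVec
          (Sum.elim (g1 - m1) (g2 - m2))
      = (m + (Cf1 * C11⁻¹).mulVec (g1 - m1))
        + ((Cf2 - Cf1 * C11⁻¹ * C12) * (C22 - C21 * C11⁻¹ * C12)⁻¹).mulVec
            (g2 - (m2 + (C21 * C11⁻¹).mulVec (g1 - m1))) := by
  rw [fromCols_mul_inv_fromBlocks_s3 Cf1 Cf2 h1 h2, fromCols_sub_mul_mulVec_sumElim, sub_sub,
    add_assoc]

/-- Gaussian prediction update lemma, part (i): mean update.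
`p^{(f|1+2)} = p^{(f|1)} + (C_f2 − C_f1·C_11⁻¹·C_12)·(Q^{(2|1)})⁻¹·(g_2 − p^{(2|1)})`. -/
theorem gaussian_prediction_update_mean
    {a b c : Type*} [Fintype a] [Fintype b] [Fintype c]
    [DecidableEq a] [DecidableEq b] [DecidableEq c]
    [Nonempty a] [Nonempty b] [Nonempty c]
    (Cf1 : Matrix a b ℝ) (Cf2 : Matrix a c ℝ)
    (C11 : Matrix b b ℝ) (C12 : Matrix b c ℝ) (C21 : Matrix c b ℝ) (C22 : Matrix c c ℝ)
    (h1 : IsUnit C11)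
    (h2 : IsUnit (C22 - C21 * C11⁻¹ * C12))
    (m : a → ℝ) (m1 g1 : b → ℝ) (m2 g2 : c → ℝ) :
    m + (fromCols Cf1 Cf2 * (fromBlocks C11 C12 C21 C22)⁻¹).mulVec
          (Sum.elim (g1 - m1) (g2 - m2))
      = (m + (Cf1 * C11⁻¹).mulVec (g1 - m1))
        + ((Cf2 - Cf1 * C11⁻¹ * C12) * (C22 - C21 * C11⁻¹ * C12)⁻¹).mulVec
            (g2 - (m2 + (C21 * C11⁻¹).mulVec (g1 - m1))) :=
  gaussian_prediction_update_mean_general Cf1 Cf2 C11 C12 C21 C22 h1 h2 m m1 g1 m2 g2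
end

section
/- (Gaussian prediction update lemma, part (ii): covariance update.) Q^{(f|1+2)} = Q^{(f|1)} − (C_f2 − C_f1·C_11⁻¹·C_12) · (Q^{(2|1)})⁻¹ · (C_f2ᵀ − C_21·C_11⁻¹·C_f1ᵀ). -/
open Matrix

/-!
Block elimination along `A` writes the inverse of the block matrix with blocks `A, B, C, D` as the
inverse of its corner `A` plus a correction that factors through the inverse of the Schur complement
`D - C * A⁻¹ * B`. Conditioning on the second block as well therefore only subtracts this
correction, sandwiched between the residuals of the cross-covariances after regression on the first
block.
-/

section SchurComplement

variable {R l m n k : Type*} [CommRing R] [Fintype m] [Fintype n] [DecidableEq m] [DecidableEq n]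

theorem inv_fromBlocks_eq_corner_add_schur {A : Matrix m m R} (B : Matrix m n R)
    (C : Matrix n m R) {D : Matrix n n R} (hA : IsUnit A) (hS : IsUnit (D - C * A⁻¹ * B)) :
    (fromBlocks A B C D)⁻¹ = fromBlocks A⁻¹ 0 0 0
      + fromRows (-(A⁻¹ * B)) (1 : Matrix n n R) * (D - C * A⁻¹ * B)⁻¹
        * fromCols (-(C * A⁻¹)) (1 : Matrix n n R) := by
  let := hA.invertible
  rw [← invOf_eq_nonsing_inv A] at hS ⊢
  let := hS.invertible
  let := fromBlocks₁₁Invertible A B C D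
  rw [← invOf_eq_nonsing_inv (D - C * ⅟A * B), ← invOf_eq_nonsing_inv (fromBlocks A B C D),
    invOf_fromBlocks₁₁_eq, fromRows_mul, fromRows_mul_fromCols, fromBlocks_add]
  simp only [Matrix.neg_mul, Matrix.mul_neg, neg_neg, Matrix.one_mul, Matrix.mul_one, zero_add,
    Matrix.mul_assoc]

theorem fromCols_mul_inv_fromBlocks_mul_fromRows (U₁ : Matrix l m R) (U₂ : Matrix l n R)
    {A : Matrix m m R} (B : Matrix m n R) (C : Matrix n m R) {D : Matrix n n R}
    (V₁ : Matrix m k R) (V₂ : Matrix n k R) (hA : IsUnit A) (hS : IsUnit (D - C * A⁻¹ * B)) :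
    fromCols U₁ U₂ * (fromBlocks A B C D)⁻¹ * fromRows V₁ V₂ =
      U₁ * A⁻¹ * V₁
        + (U₂ - U₁ * A⁻¹ * B) * (D - C * A⁻¹ * B)⁻¹ * (V₂ - C * A⁻¹ * V₁) := by
  have corner : fromCols U₁ U₂ * fromBlocks A⁻¹ 0 0 (0 : Matrix n n R) * fromRows V₁ V₂ =
      U₁ * A⁻¹ * V₁ := by
    simp only [fromCols_mul_fromBlocks, fromCols_mul_fromRows, Matrix.mul_zero, Matrix.zero_mul,
      add_zero]
  have left_residual : fromCols U₁ U₂ * fromRows (-(A⁻¹ * B)) (1 : Matrix n n R) =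
      U₂ - U₁ * A⁻¹ * B := by
    rw [fromCols_mul_fromRows, Matrix.mul_neg, Matrix.mul_one, neg_add_eq_sub, Matrix.mul_assoc]
  have right_residual : fromCols (-(C * A⁻¹)) (1 : Matrix n n R) * fromRows V₁ V₂ =
      V₂ - C * A⁻¹ * V₁ := by
    rw [fromCols_mul_fromRows, Matrix.neg_mul, Matrix.one_mul, neg_add_eq_sub]
  rw [inv_fromBlocks_eq_corner_add_schur B C hA hS, Matrix.mul_add, Matrix.add_mul, corner,
    ← left_residual, ← right_residual]
  simp only [Matrix.mul_assoc]

end SchurComplement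

theorem gaussian_prediction_update_covariance_general
    {R a b c d : Type*} [CommRing R] [Fintype b] [Fintype c] [DecidableEq b] [DecidableEq c]
    (Cfg : Matrix a d R) (Cf1 : Matrix a b R) (Cf2 : Matrix a c R)
    (C1g : Matrix b d R) (C2g : Matrix c d R)
    {C11 : Matrix b b R} (C12 : Matrix b c R) (C21 : Matrix c b R) {C22 : Matrix c c R}
    (h1 : IsUnit C11) (h2 : IsUnit (C22 - C21 * C11⁻¹ * C12)) :
    Cfg - fromCols Cf1 Cf2 * (fromBlocks C11 C12 C21 C22)⁻¹ * fromRows C1g C2g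
      = (Cfg - Cf1 * C11⁻¹ * C1g)
        - (Cf2 - Cf1 * C11⁻¹ * C12) * (C22 - C21 * C11⁻¹ * C12)⁻¹
          * (C2g - C21 * C11⁻¹ * C1g) := by
  rw [fromCols_mul_inv_fromBlocks_mul_fromRows Cf1 Cf2 C12 C21 C1g C2g h1 h2, sub_add_eq_sub_sub]

/-- Gaussian prediction update lemma, part (ii): covariance update.
`Q^{(f|1+2)} = Q^{(f|1)} − (C_f2 − C_f1·C_11⁻¹·C_12)·(Q^{(2|1)})⁻¹·(C_f2ᵀ − C_21·C_11⁻¹·C_f1ᵀ)`. -/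
theorem gaussian_prediction_update_covariance
    {a b c : Type*} [Fintype a] [Fintype b] [Fintype c]
    [DecidableEq a] [DecidableEq b] [DecidableEq c]
    [Nonempty a] [Nonempty b] [Nonempty c]
    (Cff : Matrix a a ℝ) (Cf1 : Matrix a b ℝ) (Cf2 : Matrix a c ℝ)
    (C11 : Matrix b b ℝ) (C12 : Matrix b c ℝ) (C21 : Matrix c b ℝ) (C22 : Matrix c c ℝ)
    (h1 : IsUnit C11)
    (h2 : IsUnit (C22 - C21 * C11⁻¹ * C12)) :
    Cff - fromCols Cf1 Cf2 * (fromBlocks C11 C12 C21 C22)⁻¹ * fromRows Cf1ᵀ Cf2ᵀ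
      = (Cff - Cf1 * C11⁻¹ * Cf1ᵀ)
        - (Cf2 - Cf1 * C11⁻¹ * C12) * (C22 - C21 * C11⁻¹ * C12)⁻¹
          * (Cf2ᵀ - C21 * C11⁻¹ * Cf1ᵀ) :=
  gaussian_prediction_update_covariance_general Cff Cf1 Cf2 Cf1ᵀ Cf2ᵀ C12 C21 h1 h2
end

section
/- (Second-moment formula for the updated predictive mean.) The fluctuation covariance of the updated predictive mean under the data-predictive moments is ∫ (p^{(f|1+2)}(g₂) − p^{(f|1)})(p^{(f|1+2)}(g₂) − p^{(f|1)})ᵀ dν(g₂) = A · (Q^{(2|1)})⁻¹ · Aᵀ entrywise, where A := K_x2 − K_x1(K_11+Σ_1)⁻¹K_12. -/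
open Matrix MeasureTheory

/-!
Conditioning a Gaussian prior on two data sets at once is the same as conditioning it on the first
and then using the resulting predictive mean and covariance as the prior for the second: this is
block elimination in the joint covariance matrix `Γ`. Hence `p^{(f|1+2)}(g₂) - p^{(f|1)}` is the
linear image `A Q⁻¹ (g₂ - p^{(2|1)})` of the innovation, whose second moment matrix is `Q`, and
`A Q⁻¹ Q (A Q⁻¹)ᵀ = A Q⁻¹ Aᵀ` because a second moment matrix is symmetric.
-/

section Conditioning

variable {R x y d b c : Type*} [CommRing R] [Fintype d] [DecidableEq d]
  [Fintype b] [DecidableEq b] [Fintype c] [DecidableEq c]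

/-- The predictive mean of Gaussian process regression at points with prior mean `m`, given data
`g` with prior mean `μ` and covariance `Γ`, noise included; `K` is the prior cross-covariance of
points and data. -/
noncomputable def predictiveMean (m : x → R) (K : Matrix x d R) (Γ : Matrix d d R)
    (μ g : d → R) : x → R :=
  m + (K * Γ⁻¹) *ᵥ (g - μ)

/-- The predictive (cross-)covariance of two families of points with prior covariance `K`, given
data with covariance `Γ`, noise included; `L` and `U` are the prior cross-covariances of the
families with the data. This is the Schur complement of `Γ` in `fromBlocks Γ U L K`. -/
noncomputable def predictiveCov (K : Matrix x y R) (L : Matrix x d R) (Γ : Matrix d d R)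
    (U : Matrix d y R) : Matrix x y R :=
  K - L * Γ⁻¹ * U

theorem isUnit_fromBlocks_of_isUnit_predictiveCov {Γ₁ : Matrix b b R} {U : Matrix b c R}
    {L : Matrix c b R} {Γ₂ : Matrix c c R} (hΓ₁ : IsUnit Γ₁)
    (hQ : IsUnit (predictiveCov Γ₂ L Γ₁ U)) : IsUnit (fromBlocks Γ₁ U L Γ₂) := by
  have : Invertible Γ₁ := hΓ₁.invertible
  rwa [isUnit_fromBlocks_iff_of_invertible₁₁, invOf_eq_nonsing_inv]

theorem inv_fromBlocks_mulVec_sumElim {Γ₁ : Matrix b b R} {U : Matrix b c R}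
    {L : Matrix c b R} {Γ₂ : Matrix c c R} (hΓ₁ : IsUnit Γ₁)
    (hQ : IsUnit (predictiveCov Γ₂ L Γ₁ U)) (u : b → R) {v w : c → R}
    (hw : predictiveCov Γ₂ L Γ₁ U *ᵥ w = v - L *ᵥ Γ₁⁻¹ *ᵥ u) :
    (fromBlocks Γ₁ U L Γ₂)⁻¹ *ᵥ Sum.elim u v = Sum.elim (Γ₁⁻¹ *ᵥ (u - U *ᵥ w)) w := by
  have hΓ := isUnit_fromBlocks_of_isUnit_predictiveCov hΓ₁ hQ
  rw [isUnit_iff_isUnit_det] at hΓ₁ hΓ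
  have upper : Γ₁ *ᵥ Γ₁⁻¹ *ᵥ (u - U *ᵥ w) + U *ᵥ w = u := by
    rw [mulVec_mulVec, mul_nonsing_inv _ hΓ₁, one_mulVec, sub_add_cancel]
  have lower : L *ᵥ Γ₁⁻¹ *ᵥ (u - U *ᵥ w) + Γ₂ *ᵥ w = v := by
    rw [← sub_add_cancel v (L *ᵥ Γ₁⁻¹ *ᵥ u), ← hw]
    simp only [predictiveCov, sub_mulVec, mulVec_sub, mulVec_mulVec, Matrix.mul_assoc]
    abel
  have solves : fromBlocks Γ₁ U L Γ₂ *ᵥ Sum.elim (Γ₁⁻¹ *ᵥ (u - U *ᵥ w)) w = Sum.elim u v := by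
    simp only [fromBlocks_mulVec, Sum.elim_comp_inl, Sum.elim_comp_inr, upper, lower]
  rw [← solves, mulVec_mulVec, nonsing_inv_mul _ hΓ, one_mulVec]

theorem predictiveMean_fromCols_fromBlocks (m : x → R) (K₁ : Matrix x b R) (K₂ : Matrix x c R)
    {Γ₁ : Matrix b b R} {U : Matrix b c R} {L : Matrix c b R} {Γ₂ : Matrix c c R}
    (hΓ₁ : IsUnit Γ₁) (hQ : IsUnit (predictiveCov Γ₂ L Γ₁ U)) (μ₁ g₁ : b → R) (μ₂ g₂ : c → R) :
    predictiveMean m (fromCols K₁ K₂) (fromBlocks Γ₁ U L Γ₂) (Sum.elim μ₁ μ₂) (Sum.elim g₁ g₂) =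
      predictiveMean (predictiveMean m K₁ Γ₁ μ₁ g₁) (predictiveCov K₂ K₁ Γ₁ U)
        (predictiveCov Γ₂ L Γ₁ U) (predictiveMean μ₂ L Γ₁ μ₁ g₁) g₂ := by
  set Q := predictiveCov Γ₂ L Γ₁ U
  set w := Q⁻¹ *ᵥ (g₂ - predictiveMean μ₂ L Γ₁ μ₁ g₁) with hw_def
  have hw : Q *ᵥ w = (g₂ - μ₂) - L *ᵥ Γ₁⁻¹ *ᵥ (g₁ - μ₁) := by
    rw [hw_def, mulVec_mulVec, mul_nonsing_inv _ ((isUnit_iff_isUnit_det _).mp hQ), one_mulVec,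
      predictiveMean, ← mulVec_mulVec, sub_add_eq_sub_sub]
  calc
    _ = m + (K₁ *ᵥ Γ₁⁻¹ *ᵥ ((g₁ - μ₁) - U *ᵥ w) + K₂ *ᵥ w) := by
      rw [predictiveMean, ← Sum.elim_sub_sub, ← mulVec_mulVec,
        inv_fromBlocks_mulVec_sumElim hΓ₁ hQ _ hw, fromCols_mulVec_sumElim]
    _ = predictiveMean m K₁ Γ₁ μ₁ g₁ + predictiveCov K₂ K₁ Γ₁ U *ᵥ w := by
      simp only [predictiveMean, predictiveCov, sub_mulVec, mulVec_sub, mulVec_mulVec,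
        Matrix.mul_assoc]
      abel
    _ = _ := by rw [hw_def, mulVec_mulVec, ← predictiveMean]

end Conditioning

section SecondMoments

variable {𝕜 Ω : Type*} [RCLike 𝕜] [MeasurableSpace Ω] {ν : Measure Ω}

theorem integrable_sub_const_mul_sub_const [IsFiniteMeasure ν] {X Y : Ω → 𝕜}
    (hX : Integrable X ν) (hY : Integrable Y ν) (hXY : Integrable (fun ω => X ω * Y ω) ν)
    (s t : 𝕜) : Integrable (fun ω => (X ω - s) * (Y ω - t)) ν := by
  have expansion : (fun ω => (X ω - s) * (Y ω - t)) =
      fun ω => X ω * Y ω - X ω * t - s * (Y ω - t) := by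
    ext ω
    ring
  rw [expansion]
  exact (hXY.sub (hX.mul_const t)).sub ((hY.sub (integrable_const t)).const_mul s)

theorem integral_mulVec_mul_mulVec {m n p q : Type*} [Fintype p] [Fintype q]
    {X : Ω → p → 𝕜} {Y : Ω → q → 𝕜} {M : Matrix p q 𝕜}
    (hint : ∀ k l, Integrable (fun ω => X ω k * Y ω l) ν)
    (hM : ∀ k l, ∫ ω, X ω k * Y ω l ∂ν = M k l)
    (B : Matrix m p 𝕜) (C : Matrix n q 𝕜) (i : m) (j : n) :
    ∫ ω, (B *ᵥ X ω) i * (C *ᵥ Y ω) j ∂ν = (B * M * Cᵀ) i j := by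
  have weighted_integrable : ∀ k l, Integrable (fun ω => B i k * C j l * (X ω k * Y ω l)) ν :=
    fun k l => (hint k l).const_mul _
  calc
    _ = ∫ ω, ∑ k, ∑ l, B i k * C j l * (X ω k * Y ω l) ∂ν := by
      simp only [mulVec, dotProduct, Finset.sum_mul_sum, mul_mul_mul_comm]
    _ = ∑ k, ∑ l, B i k * C j l * M k l := by
      rw [integral_finsetSum _ fun k _ => integrable_finsetSum _ fun l _ => weighted_integrable k l]
      simp only [integral_finsetSum _ fun l _ => weighted_integrable _ l, integral_const_mul, hM]
    _ = (B * M * Cᵀ) i j := by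
      rw [Matrix.mul_assoc]
      simp only [mul_apply, transpose_apply, Finset.mul_sum, mul_comm (M _ _), mul_assoc]

theorem integral_predictiveMean_sub_mul_sub {a c : Type*} [Fintype c] [DecidableEq c]
    {Y : Ω → c → 𝕜} {p : c → 𝕜} {Q : Matrix c c 𝕜} (hQ : IsUnit Q)
    (hint : ∀ k l, Integrable (fun ω => (Y ω k - p k) * (Y ω l - p l)) ν)
    (hcov : ∀ k l, ∫ ω, (Y ω k - p k) * (Y ω l - p l) ∂ν = Q k l)
    (m : a → 𝕜) (A : Matrix a c 𝕜) (i j : a) :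
    ∫ ω, (predictiveMean m A Q p (Y ω) i - m i) * (predictiveMean m A Q p (Y ω) j - m j) ∂ν =
      (A * Q⁻¹ * Aᵀ) i j := by
  have symm : Qᵀ = Q := by
    ext k l
    simp only [transpose_apply, ← hcov, mul_comm]
  calc
    _ = ∫ ω, ((A * Q⁻¹) *ᵥ (Y ω - p)) i * ((A * Q⁻¹) *ᵥ (Y ω - p)) j ∂ν := by
      simp only [predictiveMean, Pi.add_apply, add_sub_cancel_left]
    _ = (A * Q⁻¹ * Q * (A * Q⁻¹)ᵀ) i j := integral_mulVec_mul_mulVec hint hcov _ _ i j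
    _ = (A * Q⁻¹ * Aᵀ) i j := by
      rw [nonsing_inv_mul_cancel_right _ _ ((isUnit_iff_isUnit_det _).mp hQ), transpose_mul,
        transpose_nonsing_inv, symm, ← Matrix.mul_assoc]

theorem second_moment_updated_predictive_mean_general {a b c : Type*}
    [Fintype b] [DecidableEq b] [Fintype c] [DecidableEq c]
    (m : a → 𝕜) (K₁ : Matrix a b 𝕜) (K₂ : Matrix a c 𝕜)
    {Γ₁ : Matrix b b 𝕜} {U : Matrix b c 𝕜} {L : Matrix c b 𝕜} {Γ₂ : Matrix c c 𝕜}
    (μ₁ g₁ : b → 𝕜) (μ₂ : c → 𝕜) {Y : Ω → c → 𝕜} {p : c → 𝕜} {Q : Matrix c c 𝕜}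
    (hp : p = predictiveMean μ₂ L Γ₁ μ₁ g₁) (hQ : Q = predictiveCov Γ₂ L Γ₁ U)
    (hΓ₁_unit : IsUnit Γ₁) (hQ_unit : IsUnit Q)
    (hint : ∀ k l, Integrable (fun ω => (Y ω k - p k) * (Y ω l - p l)) ν)
    (hcov : ∀ k l, ∫ ω, (Y ω k - p k) * (Y ω l - p l) ∂ν = Q k l) (i j : a) :
    let before := predictiveMean m K₁ Γ₁ μ₁ g₁
    let after := fun ω => predictiveMean m (fromCols K₁ K₂) (fromBlocks Γ₁ U L Γ₂)
      (Sum.elim μ₁ μ₂) (Sum.elim g₁ (Y ω))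
    let A := predictiveCov K₂ K₁ Γ₁ U
    ∫ ω, (after ω i - before i) * (after ω j - before j) ∂ν = (A * Q⁻¹ * Aᵀ) i j := by
  subst hp hQ
  simp only [predictiveMean_fromCols_fromBlocks m K₁ K₂ hΓ₁_unit hQ_unit]
  exact integral_predictiveMean_sub_mul_sub hQ_unit hint hcov _ _ i j

end SecondMoments

/-- Second-moment formula: the fluctuation covariance of the updated predictive mean
under the data-predictive moments is
`∫ (p^{(f|1+2)}(g₂) − p^{(f|1)})(p^{(f|1+2)}(g₂) − p^{(f|1)})ᵀ dν = A·(Q^{(2|1)})⁻¹·Aᵀ`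
entrywise, where `A := K_x2 − K_x1(K_11+Σ_1)⁻¹K_12`. -/
theorem second_moment_updated_predictive_mean
    {a b c : Type*} [Fintype a] [Fintype b] [Fintype c]
    [DecidableEq a] [DecidableEq b] [DecidableEq c]
    [Nonempty a] [Nonempty b] [Nonempty c]
    (Kx1 : Matrix a b ℝ) (Kx2 : Matrix a c ℝ)
    (K11 : Matrix b b ℝ) (K12 : Matrix b c ℝ) (K22 : Matrix c c ℝ)
    (S1 : Matrix b b ℝ) (S2 : Matrix c c ℝ)
    (h1 : IsUnit (K11 + S1))
    (Q21 : Matrix c c ℝ)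
    (hQ21 : Q21 = K22 + S2 - K12ᵀ * (K11 + S1)⁻¹ * K12)
    (h2 : IsUnit Q21)
    (Γ : Matrix (b ⊕ c) (b ⊕ c) ℝ)
    (hΓ : Γ = fromBlocks (K11 + S1) K12 K12ᵀ (K22 + S2))
    (μx : a → ℝ) (μ1 : b → ℝ) (μ2 : c → ℝ) (g1 : b → ℝ)
    (pf1 : a → ℝ)
    (hpf1 : pf1 = μx + (Kx1 * (K11 + S1)⁻¹).mulVec (g1 - μ1))
    (p21 : c → ℝ)
    (hp21 : p21 = μ2 + (K12ᵀ * (K11 + S1)⁻¹).mulVec (g1 - μ1))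
    (pf12 : (c → ℝ) → (a → ℝ))
    (hpf12 : ∀ g2, pf12 g2
      = μx + (fromCols Kx1 Kx2 * Γ⁻¹).mulVec (Sum.elim (g1 - μ1) (g2 - μ2)))
    (A : Matrix a c ℝ)
    (hA : A = Kx2 - Kx1 * (K11 + S1)⁻¹ * K12)
    (ν : Measure (c → ℝ)) [IsProbabilityMeasure ν]
    (hint1 : ∀ i, Integrable (fun g2 => g2 i) ν)
    (hint2 : ∀ i j, Integrable (fun g2 => g2 i * g2 j) ν)
    (hmean : ∀ i, ∫ g2, g2 i ∂ν = p21 i)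
    (hcov : ∀ i j, ∫ g2, (g2 i - p21 i) * (g2 j - p21 j) ∂ν = Q21 i j) :
    ∀ i j, ∫ g2, (pf12 g2 i - pf1 i) * (pf12 g2 j - pf1 j) ∂ν
      = (A * Q21⁻¹ * Aᵀ) i j := by
  intro i j
  have hint : ∀ k l, Integrable (fun g2 : c → ℝ => (g2 k - p21 k) * (g2 l - p21 l)) ν :=
    fun k l => integrable_sub_const_mul_sub_const (hint1 k) (hint1 l) (hint2 k l) _ _
  subst hΓ hpf1 hA
  simp only [hpf12, Sum.elim_sub_sub]
  exact second_moment_updated_predictive_mean_general μx Kx1 Kx2 μ1 g1 μ2 hp21 hQ21 h1 h2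
    hint hcov i j
end

section
/- (Cross-covariance correction with redundant points, eq. otherterm.) If K_11 is invertible, then K_x2 − K_x1·K_11⁻¹·K_12 = [q, 0], i.e., the x×(y2⊕r) matrix whose y2 block-column is q and whose r block-column is zero. -/
open Matrix

/-!
Split `K_11 = [S, T]` and `K_12 = [L, T]` by columns; the redundant block `T` is common to both.
The `r` block-column of `K_x1 · K_11⁻¹ · K_11 = K_x1` is `K_x1 · K_11⁻¹ · T = J_xr`, so the
subtraction cancels the `r` block-column of `K_x2`.
-/

theorem fromCols_sub_fromCols {R m n₁ n₂ : Type*} [Sub R]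
    (A₁ B₁ : Matrix m n₁ R) (A₂ B₂ : Matrix m n₂ R) :
    fromCols A₁ A₂ - fromCols B₁ B₂ = fromCols (A₁ - B₁) (A₂ - B₂) := by
  ext i (j | j) <;> rfl

section

variable {R x y1 y2 r n : Type*} [Fintype y1] [Fintype r] [Fintype n]
  [DecidableEq y1] [DecidableEq r]

theorem fromCols_mul_mul_of_mul_fromCols_eq_one [Semiring R]
    {P : Matrix (y1 ⊕ r) n R} {S : Matrix n y1 R} {T : Matrix n r R}
    (hP : P * fromCols S T = 1) (U : Matrix x y1 R) (V : Matrix x r R) :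
    fromCols U V * P * T = V := by
  have hcols : fromCols (fromCols U V * P * S) (fromCols U V * P * T) = fromCols U V := by
    rw [← mul_fromCols, Matrix.mul_assoc, hP, Matrix.mul_one]
  exact (fromCols_inj hcols).2

theorem cross_covariance_redundant_points_general [Ring R]
    {P : Matrix (y1 ⊕ r) n R} {S : Matrix n y1 R} {T : Matrix n r R}
    (hP : P * fromCols S T = 1) (L : Matrix n y2 R)
    (Jx1 : Matrix x y1 R) (Jx2 : Matrix x y2 R) (Jxr : Matrix x r R) :
    fromCols Jx2 Jxr - fromCols Jx1 Jxr * P * fromCols L T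
      = fromCols (Jx2 - fromCols Jx1 Jxr * P * L) 0 := by
  rw [mul_fromCols, fromCols_mul_mul_of_mul_fromCols_eq_one hP, fromCols_sub_fromCols, sub_self]

end

/-- Cross-covariance correction with redundant points (eq. otherterm): if `K_11` is
invertible, then `K_x2 − K_x1·K_11⁻¹·K_12 = [q, 0]`, with
`q := J_x2 − K_x1·K_11⁻¹·L_12`. -/
theorem cross_covariance_redundant_points
    {x y1 y2 r : Type*} [Fintype x] [Fintype y1] [Fintype y2] [Fintype r]
    [DecidableEq x] [DecidableEq y1] [DecidableEq y2] [DecidableEq r]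
    [Nonempty x] [Nonempty y1] [Nonempty y2] [Nonempty r]
    (J11 : Matrix y1 y1 ℝ) (J1r : Matrix y1 r ℝ) (Jrr : Matrix r r ℝ)
    (J12 : Matrix y1 y2 ℝ) (Jr2 : Matrix r y2 ℝ)
    (Jx1 : Matrix x y1 ℝ) (Jx2 : Matrix x y2 ℝ) (Jxr : Matrix x r ℝ)
    (hK11 : IsUnit (fromBlocks J11 J1r J1rᵀ Jrr)) :
    fromCols Jx2 Jxr
      - fromCols Jx1 Jxr * (fromBlocks J11 J1r J1rᵀ Jrr)⁻¹
        * fromBlocks J12 J1r Jr2 Jrr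
      = fromCols
          (Jx2 - fromCols Jx1 Jxr * (fromBlocks J11 J1r J1rᵀ Jrr)⁻¹ * fromRows J12 Jr2)
          0 := by
  have hinv := nonsing_inv_mul _ ((isUnit_iff_isUnit_det _).mp hK11)
  simp only [← fromCols_fromRows_eq_fromBlocks] at hinv ⊢
  exact cross_covariance_redundant_points_general hinv (fromRows J12 Jr2) Jx1 Jx2 Jxr
end

section
/- (Convergence of the information-correction term in the zero-noise limit, eq. T_and_Tprime.) The map ε ↦ (K_x2 − K_x1·K_11⁻¹·K_12) · (K_22 + ε·Σ̄ − K_21·K_11⁻¹·K_12)⁻¹ · (K_x2ᵀ − K_21·K_11⁻¹·K_x1ᵀ) tends, as ε → 0 along positive reals, to q·z⁻¹·qᵀ. -/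
open Matrix Filter

open scoped Topology

/-!
Redundant points occur in both point sets, so the redundant columns of `K₁₂` are columns of `K₁₁`
and `K₁₁⁻¹` sends them to standard basis vectors. Conditioning on the first set
therefore annihilates all redundant blocks: the outer factors become `[q, 0]` and `[q, 0]ᵀ`, and
the noiseless middle factor becomes `diag(z, 0)`. This matrix is singular, but only the top-left
block of the inverse of `diag(z, 0) + ε Σ̄` contributes. By block elimination it equals
`(z + ε T)⁻¹`, where `T` is the Schur complement in `Σ̄` of its redundant block and the singular
factor `ε⁻¹` has cancelled, so it converges to `z⁻¹`.
-/

section Conditioning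

variable {l m n p r s α : Type*} [Fintype n] [DecidableEq n] [CommRing α]
  {K : Matrix n n α}

lemma mul_inv_mul_submatrix_id (X : Matrix l n α) (hK : IsUnit K) (e : r → n) :
    X * K⁻¹ * K.submatrix id e = X.submatrix id e :=
  calc X * K⁻¹ * K.submatrix id e
    _ = (X * K⁻¹ * K).submatrix id e := rfl
    _ = X.submatrix id e := by
      rw [nonsing_inv_mul_cancel_right _ _ ((isUnit_iff_isUnit_det K).1 hK)]

lemma submatrix_id_mul_inv_mul (Y : Matrix n l α) (hK : IsUnit K) (e : r → n) :
    K.submatrix e id * K⁻¹ * Y = Y.submatrix e id :=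
  calc K.submatrix e id * K⁻¹ * Y
    _ = (K * K⁻¹ * Y).submatrix e id := rfl
    _ = Y.submatrix e id := by
      rw [mul_nonsing_inv _ ((isUnit_iff_isUnit_det K).1 hK), Matrix.one_mul]

lemma fromCols_sub_mul_inv_mul_fromCols (P : Matrix l m α) (X : Matrix l n α)
    (L : Matrix n m α) (hK : IsUnit K) (e : r → n) :
    fromCols P (X.submatrix id e) - X * K⁻¹ * fromCols L (K.submatrix id e) =
      fromCols (P - X * K⁻¹ * L) 0 := by
  rw [mul_fromCols, mul_inv_mul_submatrix_id X hK]
  ext i (j | j) <;> simp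

lemma fromRows_sub_fromRows_mul_inv_mul (Q : Matrix m l α) (Y : Matrix n l α)
    (U : Matrix m n α) (hK : IsUnit K) (e : r → n) :
    fromRows Q (Y.submatrix e id) - fromRows U (K.submatrix e id) * K⁻¹ * Y =
      fromRows (Q - U * K⁻¹ * Y) 0 := by
  rw [fromRows_mul, fromRows_mul, submatrix_id_mul_inv_mul Y hK]
  ext (i | i) j <;> simp

lemma fromBlocks_sub_fromRows_mul_inv_mul_fromCols (A : Matrix m p α) (U : Matrix m n α)
    (L : Matrix n p α) (hK : IsUnit K) (e : r → n) (f : s → n) :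
    fromBlocks A (U.submatrix id f) (L.submatrix e id) (K.submatrix e f) -
        fromRows U (K.submatrix e id) * K⁻¹ * fromCols L (K.submatrix id f) =
      fromBlocks (A - U * K⁻¹ * L) 0 0 0 := by
  rw [fromRows_mul, fromRows_mul_fromCols, mul_inv_mul_submatrix_id U hK,
    submatrix_id_mul_inv_mul L hK, submatrix_id_mul_inv_mul _ hK]
  ext (i | i) (j | j) <;> simp

end Conditioning

lemma fromCols_zero_mul_mul_fromRows_zero {k l m n p q α : Type*} [Fintype l] [Fintype m]
    [Fintype n] [Fintype p] [Semiring α] (A : Matrix k l α)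
    (M : Matrix (l ⊕ m) (n ⊕ p) α) (B : Matrix n q α) :
    fromCols A (0 : Matrix k m α) * M * fromRows B (0 : Matrix p q α) =
      A * M.toBlocks₁₁ * B := by
  conv_lhs => rw [← fromBlocks_toBlocks M]
  rw [fromCols_mul_fromBlocks, fromCols_mul_fromRows]
  simp

section BlockInverse

variable {m n α : Type*} [Fintype m] [Fintype n] [DecidableEq m] [DecidableEq n] [CommRing α]

lemma toBlocks₁₁_inv_fromBlocks (A : Matrix m m α) (B : Matrix m n α) (C : Matrix n m α)
    {D : Matrix n n α} (hD : IsUnit D) :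
    (fromBlocks A B C D)⁻¹.toBlocks₁₁ = (A - B * D⁻¹ * C)⁻¹ := by
  obtain ⟨_⟩ := hD.nonempty_invertible
  have hunit : IsUnit (fromBlocks A B C D) ↔ IsUnit (A - B * ⅟D * C) :=
    isUnit_fromBlocks_iff_of_invertible₂₂
  rw [← invOf_eq_nonsing_inv D]
  by_cases hschur : IsUnit (A - B * ⅟D * C)
  · obtain ⟨_⟩ := hschur.nonempty_invertible
    obtain ⟨_⟩ := (hunit.2 hschur).nonempty_invertible
    rw [← invOf_eq_nonsing_inv, invOf_fromBlocks₂₂_eq, toBlocks_fromBlocks₁₁,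
      invOf_eq_nonsing_inv]
  · -- Both matrices are singular, so both inverses take the junk value `0`.
    rw [nonsing_inv_eq_ringInverse, nonsing_inv_eq_ringInverse,
      Ring.inverse_non_unit _ hschur, Ring.inverse_non_unit _ (hunit.not.2 hschur)]
    rfl

lemma toBlocks₁₁_inv_fromBlocks_zero_add_smul (z : Matrix m m α)
    {S : Matrix (m ⊕ n) (m ⊕ n) α} (hS : IsUnit S.toBlocks₂₂) (ε : αˣ) :
    (fromBlocks z 0 0 0 + ε • S)⁻¹.toBlocks₁₁ =
      (z + ε • (S.toBlocks₁₁ - S.toBlocks₁₂ * S.toBlocks₂₂⁻¹ * S.toBlocks₂₁))⁻¹ := by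
  have hsum : fromBlocks z 0 0 0 + ε • S = fromBlocks (z + ε • S.toBlocks₁₁)
      (ε • S.toBlocks₁₂) (ε • S.toBlocks₂₁) (ε • S.toBlocks₂₂) := by
    ext (i | i) (j | j) <;> simp [toBlocks₁₁, toBlocks₁₂, toBlocks₂₁, toBlocks₂₂]
  have hinv : (ε • S.toBlocks₂₂)⁻¹ = ε⁻¹ • S.toBlocks₂₂⁻¹ :=
    inv_smul' _ ε ((isUnit_iff_isUnit_det _).1 hS)
  rw [hsum, toBlocks₁₁_inv_fromBlocks _ _ _ (hS.smul ε), hinv]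
  simp [smul_sub, add_sub_assoc]

end BlockInverse

section Limit

variable {m n 𝕜 : Type*} [Fintype m] [Fintype n] [DecidableEq m] [DecidableEq n]
  [Field 𝕜] [TopologicalSpace 𝕜] [IsTopologicalDivisionRing 𝕜] {z : Matrix m m 𝕜}

lemma continuousAt_matrix_inv_of_isUnit (hz : IsUnit z) : ContinuousAt Inv.inv z := by
  refine continuousAt_matrix_inv z ?_
  rw [Ring.inverse_eq_inv']
  exact continuousAt_inv₀ ((isUnit_iff_isUnit_det z).1 hz).ne_zero

lemma tendsto_toBlocks₁₁_inv_fromBlocks_zero_add_smul (hz : IsUnit z)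
    {S : Matrix (m ⊕ n) (m ⊕ n) 𝕜} (hS : IsUnit S.toBlocks₂₂) :
    Tendsto (fun ε : 𝕜 => (fromBlocks z 0 0 0 + ε • S)⁻¹.toBlocks₁₁)
      (𝓝[≠] 0) (𝓝 z⁻¹) := by
  set T := S.toBlocks₁₁ - S.toBlocks₁₂ * S.toBlocks₂₂⁻¹ * S.toBlocks₂₁
  have hpert : Tendsto (fun ε : 𝕜 => z + ε • T) (𝓝 0) (𝓝 z) :=
    Continuous.tendsto' (by fun_prop) 0 z (by simp)
  have hlim : Tendsto (fun ε : 𝕜 => (z + ε • T)⁻¹) (𝓝[≠] 0) (𝓝 z⁻¹) :=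
    ((continuousAt_matrix_inv_of_isUnit hz).tendsto.comp hpert).mono_left nhdsWithin_le_nhds
  refine hlim.congr' ?_
  filter_upwards [self_mem_nhdsWithin] with ε hε
  exact (toBlocks₁₁_inv_fromBlocks_zero_add_smul z hS (Units.mk0 ε hε)).symm

end Limit

theorem correction_term_zero_noise_limit_general
    {𝕜 x x' y1 y2 r : Type*} [Field 𝕜] [TopologicalSpace 𝕜] [IsTopologicalDivisionRing 𝕜]
    [Fintype y1] [Fintype y2] [Fintype r] [DecidableEq y1] [DecidableEq y2] [DecidableEq r]
    {J11 : Matrix y1 y1 𝕜} {J1r : Matrix y1 r 𝕜} {Jr1 : Matrix r y1 𝕜} {Jrr : Matrix r r 𝕜}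
    {J12 : Matrix y1 y2 𝕜} {J21 : Matrix y2 y1 𝕜} {Jr2 : Matrix r y2 𝕜} {J2r : Matrix y2 r 𝕜}
    {J22 : Matrix y2 y2 𝕜}
    {Jx1 : Matrix x y1 𝕜} {Jx2 : Matrix x y2 𝕜} {Jxr : Matrix x r 𝕜}
    {J1x : Matrix y1 x' 𝕜} {J2x : Matrix y2 x' 𝕜} {Jrx : Matrix r x' 𝕜}
    {K11 : Matrix (y1 ⊕ r) (y1 ⊕ r) 𝕜} (hK11 : K11 = fromBlocks J11 J1r Jr1 Jrr)
    {K22 : Matrix (y2 ⊕ r) (y2 ⊕ r) 𝕜} (hK22 : K22 = fromBlocks J22 J2r Jr2 Jrr)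
    {K12 : Matrix (y1 ⊕ r) (y2 ⊕ r) 𝕜} (hK12 : K12 = fromBlocks J12 J1r Jr2 Jrr)
    {K21 : Matrix (y2 ⊕ r) (y1 ⊕ r) 𝕜} (hK21 : K21 = fromBlocks J21 J2r Jr1 Jrr)
    {Kx1 : Matrix x (y1 ⊕ r) 𝕜} (hKx1 : Kx1 = fromCols Jx1 Jxr)
    {Kx2 : Matrix x (y2 ⊕ r) 𝕜} (hKx2 : Kx2 = fromCols Jx2 Jxr)
    {K1x : Matrix (y1 ⊕ r) x' 𝕜} (hK1x : K1x = fromRows J1x Jrx)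
    {K2x : Matrix (y2 ⊕ r) x' 𝕜} (hK2x : K2x = fromRows J2x Jrx)
    {L12 : Matrix (y1 ⊕ r) y2 𝕜} (hL12 : L12 = fromRows J12 Jr2)
    {L21 : Matrix y2 (y1 ⊕ r) 𝕜} (hL21 : L21 = fromCols J21 J2r)
    (hK11u : IsUnit K11) (hz : IsUnit (J22 - L21 * K11⁻¹ * L12))
    {S : Matrix (y2 ⊕ r) (y2 ⊕ r) 𝕜} (hS : IsUnit S.toBlocks₂₂) :
    Tendsto
      (fun ε : 𝕜 =>
        (Kx2 - Kx1 * K11⁻¹ * K12) * (K22 + ε • S - K21 * K11⁻¹ * K12)⁻¹ *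
          (K2x - K21 * K11⁻¹ * K1x))
      (𝓝[≠] 0)
      (𝓝 ((Jx2 - Kx1 * K11⁻¹ * L12) * (J22 - L21 * K11⁻¹ * L12)⁻¹ *
        (J2x - L21 * K11⁻¹ * K1x))) := by
  have hcols : K12 = fromCols L12 (K11.submatrix id Sum.inr) := by
    subst hK12 hL12 hK11; ext (i | i) (j | j) <;> rfl
  have hrows : K21 = fromRows L21 (K11.submatrix Sum.inr id) := by
    subst hK21 hL21 hK11; ext (i | i) (j | j) <;> rfl
  have hleft : Kx2 - Kx1 * K11⁻¹ * K12 = fromCols (Jx2 - Kx1 * K11⁻¹ * L12) 0 := by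
    rw [← fromCols_sub_mul_inv_mul_fromCols Jx2 Kx1 L12 hK11u Sum.inr, ← hcols, hKx2, hKx1]
    rfl
  have hright : K2x - K21 * K11⁻¹ * K1x = fromRows (J2x - L21 * K11⁻¹ * K1x) 0 := by
    rw [← fromRows_sub_fromRows_mul_inv_mul J2x K1x L21 hK11u Sum.inr, ← hrows, hK2x, hK1x]
    rfl
  have hmiddle : K22 - K21 * K11⁻¹ * K12 = fromBlocks (J22 - L21 * K11⁻¹ * L12) 0 0 0 := by
    rw [← fromBlocks_sub_fromRows_mul_inv_mul_fromCols J22 L21 L12 hK11u Sum.inr Sum.inr,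
      ← hcols, ← hrows, hK22, hL12, hL21, hK11]
    rfl
  simp only [hleft, hright, add_sub_right_comm, hmiddle, fromCols_zero_mul_mul_fromRows_zero]
  have hcont : Continuous fun M : Matrix y2 y2 𝕜 =>
      (Jx2 - Kx1 * K11⁻¹ * L12) * M * (J2x - L21 * K11⁻¹ * K1x) := by fun_prop
  exact (hcont.tendsto _).comp (tendsto_toBlocks₁₁_inv_fromBlocks_zero_add_smul hz hS)

/-- Convergence of the information-correction term in the zero-noise limit
(eq. T_and_Tprime): as `ε → 0⁺`,
`(K_x2 − K_x1·K_11⁻¹·K_12)·(K_22 + ε·Σ̄ − K_21·K_11⁻¹·K_12)⁻¹·(K_x2ᵀ − K_21·K_11⁻¹·K_x1ᵀ)`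
tends to `q·z⁻¹·qᵀ`. -/
theorem correction_term_zero_noise_limit
    {x y1 y2 r : Type*} [Fintype x] [Fintype y1] [Fintype y2] [Fintype r]
    [DecidableEq x] [DecidableEq y1] [DecidableEq y2] [DecidableEq r]
    [Nonempty x] [Nonempty y1] [Nonempty y2] [Nonempty r]
    (J11 : Matrix y1 y1 ℝ) (J1r : Matrix y1 r ℝ) (Jrr : Matrix r r ℝ)
    (J12 : Matrix y1 y2 ℝ) (Jr2 : Matrix r y2 ℝ) (J22 : Matrix y2 y2 ℝ)
    (Jx1 : Matrix x y1 ℝ) (Jx2 : Matrix x y2 ℝ) (Jxr : Matrix x r ℝ)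
    (hJrr : Jrrᵀ = Jrr)
    (K11 : Matrix (y1 ⊕ r) (y1 ⊕ r) ℝ) (hK11 : K11 = fromBlocks J11 J1r J1rᵀ Jrr)
    (K22 : Matrix (y2 ⊕ r) (y2 ⊕ r) ℝ) (hK22 : K22 = fromBlocks J22 Jr2ᵀ Jr2 Jrr)
    (K12 : Matrix (y1 ⊕ r) (y2 ⊕ r) ℝ) (hK12 : K12 = fromBlocks J12 J1r Jr2 Jrr)
    (Kx1 : Matrix x (y1 ⊕ r) ℝ) (hKx1 : Kx1 = fromCols Jx1 Jxr)
    (Kx2 : Matrix x (y2 ⊕ r) ℝ) (hKx2 : Kx2 = fromCols Jx2 Jxr)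
    (L12 : Matrix (y1 ⊕ r) y2 ℝ) (hL12 : L12 = fromRows J12 Jr2)
    (z : Matrix y2 y2 ℝ) (hz : z = J22 - L12ᵀ * K11⁻¹ * L12)
    (q : Matrix x y2 ℝ) (hq : q = Jx2 - Kx1 * K11⁻¹ * L12)
    (hK11pd : K11.PosDef) (hzpd : z.PosDef)
    (Sb : Matrix (y2 ⊕ r) (y2 ⊕ r) ℝ) (hSb : Sb.PosDef) :
    Tendsto
      (fun ε : ℝ =>
        (Kx2 - Kx1 * K11⁻¹ * K12)
          * (K22 + ε • Sb - K12ᵀ * K11⁻¹ * K12)⁻¹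
          * (Kx2ᵀ - K12ᵀ * K11⁻¹ * Kx1ᵀ))
      (nhdsWithin 0 (Set.Ioi 0))
      (nhds (q * z⁻¹ * qᵀ)) := by
  have hK11symm : K11ᵀ = K11 := hK11pd.isHermitian
  have hK21 : K12ᵀ = fromBlocks J12ᵀ Jr2ᵀ J1rᵀ Jrr := by
    rw [hK12, fromBlocks_transpose, hJrr]
  have hq' : qᵀ = Jx2ᵀ - L12ᵀ * K11⁻¹ * Kx1ᵀ := by
    simp [hq, transpose_nonsing_inv, hK11symm, Matrix.mul_assoc]
  have hSb22 : Sb.toBlocks₂₂.PosDef := hSb.submatrix Sum.inr_injective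
  rw [hq', hq, hz]
  exact (correction_term_zero_noise_limit_general hK11 hK22 hK12 hK21 hKx1 hKx2
    (by rw [hKx1, transpose_fromCols]) (by rw [hKx2, transpose_fromCols]) hL12
    (by rw [hL12, transpose_fromRows]) hK11pd.isUnit (hz ▸ hzpd.isUnit) hSb22.isUnit).mono_left
    (nhdsGT_le_nhdsNE 0)
end

section
/- (Zero-noise concentration of the regularized inverse.) For every ε > 0 the matrix ε·Σ̄ + Pᵀ·z·P is positive definite, and the map ε ↦ P·(ε·Σ̄ + Pᵀ·z·P)⁻¹·Pᵀ tends, as ε → 0 along positive reals, to z⁻¹. -/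
open Matrix Filter

/-!
Write `K = V A⁻¹ U`. The push-through identity `(1 + X Y)⁻¹ X = X (1 + Y X)⁻¹` turns the compression
`V (ε A + U C V)⁻¹ U` into `K (ε + C K)⁻¹`, in which the only remaining inverse is that of a matrix
with invertible limit `C K`. Letting `ε → 0` gives `K (C K)⁻¹ = C⁻¹`. For positive definite `A` and
`U = Vᴴ`, the matrix `K` is invertible as soon as `V` has linearly independent rows.
-/

open scoped Topology

section PushThrough

variable {m n R : Type*} [Fintype m] [Fintype n] [DecidableEq m] [DecidableEq n]
  [CommRing R]

theorem inv_one_add_mul_mul_comm (X : Matrix n m R) (Y : Matrix m n R) :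
    (1 + X * Y)⁻¹ * X = X * (1 + Y * X)⁻¹ := by
  by_cases hYX : IsUnit (1 + Y * X).det
  · have hXY : IsUnit (1 + X * Y).det := det_one_add_mul_comm X Y ▸ hYX
    have hpush : X * (1 + Y * X) = (1 + X * Y) * X := by
      rw [Matrix.mul_add, Matrix.add_mul, Matrix.mul_one, Matrix.one_mul, Matrix.mul_assoc]
    calc (1 + X * Y)⁻¹ * X
        = (1 + X * Y)⁻¹ * (X * (1 + Y * X)) * (1 + Y * X)⁻¹ := by
          rw [← Matrix.mul_assoc, mul_nonsing_inv_cancel_right _ _ hYX]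
      _ = X * (1 + Y * X)⁻¹ := by
          rw [hpush, nonsing_inv_mul_cancel_left _ _ hXY]
  · -- Both matrices are singular, so both inverses take the junk value `0`.
    have hXY : ¬IsUnit (1 + X * Y).det := det_one_add_mul_comm X Y ▸ hYX
    rw [nonsing_inv_apply_not_isUnit _ hXY, nonsing_inv_apply_not_isUnit _ hYX,
      Matrix.zero_mul, Matrix.mul_zero]

theorem mul_inv_add_mul_mul_mul {A : Matrix n n R} (hA : IsUnit A)
    (U : Matrix n m R) (C : Matrix m m R) (V : Matrix m n R) :
    V * (A + U * C * V)⁻¹ * U = V * A⁻¹ * U * (1 + C * (V * A⁻¹ * U))⁻¹ := by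
  have hfactor : A + U * C * V = A * (1 + A⁻¹ * U * (C * V)) := by
    rw [Matrix.mul_add, Matrix.mul_one, ← Matrix.mul_assoc, ← Matrix.mul_assoc, ← Matrix.mul_assoc,
      mul_nonsing_inv _ ((isUnit_iff_isUnit_det A).1 hA), Matrix.one_mul]
  calc V * (A + U * C * V)⁻¹ * U
      = V * ((1 + A⁻¹ * U * (C * V))⁻¹ * (A⁻¹ * U)) := by
        rw [hfactor, Matrix.mul_inv_rev]
        simp only [Matrix.mul_assoc]
    _ = V * (A⁻¹ * U * (1 + C * V * (A⁻¹ * U))⁻¹) := by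
        rw [inv_one_add_mul_mul_comm]
    _ = V * A⁻¹ * U * (1 + C * (V * A⁻¹ * U))⁻¹ := by
        simp only [Matrix.mul_assoc]

theorem inv_units_smul (t : Rˣ) (B : Matrix m m R) : (t • B)⁻¹ = t⁻¹ • B⁻¹ := by
  have hone : (t • (1 : Matrix m m R))⁻¹ = t⁻¹ • 1 := by
    rw [Matrix.inv_smul' 1 t (by simp only [det_one, isUnit_one]), inv_one]
  calc (t • B)⁻¹ = (t • (1 : Matrix m m R) * B)⁻¹ := by rw [Matrix.smul_mul, Matrix.one_mul]
    _ = t⁻¹ • B⁻¹ := by rw [Matrix.mul_inv_rev, hone, Matrix.mul_smul, Matrix.mul_one]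

theorem mul_inv_smul_add_mul_mul_mul {A : Matrix n n R} (hA : IsUnit A)
    (U : Matrix n m R) (C : Matrix m m R) (V : Matrix m n R) (t : Rˣ) :
    V * (t • A + U * C * V)⁻¹ * U = V * A⁻¹ * U * (t • 1 + C * (V * A⁻¹ * U))⁻¹ := by
  have htA : IsUnit (t • A) := hA.smul t
  have hK : V * (t • A)⁻¹ * U = t⁻¹ • (V * A⁻¹ * U) := by
    rw [inv_units_smul, Matrix.mul_smul, Matrix.smul_mul]
  calc V * (t • A + U * C * V)⁻¹ * U
      = t⁻¹ • (V * A⁻¹ * U) * (1 + C * t⁻¹ • (V * A⁻¹ * U))⁻¹ := by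
        rw [mul_inv_add_mul_mul_mul htA, hK]
    _ = V * A⁻¹ * U * (t • (1 + C * t⁻¹ • (V * A⁻¹ * U)))⁻¹ := by
        rw [inv_units_smul t (1 + _), Matrix.smul_mul, Matrix.mul_smul (V * A⁻¹ * U)]
    _ = V * A⁻¹ * U * (t • 1 + C * (V * A⁻¹ * U))⁻¹ := by
        rw [smul_add, Matrix.mul_smul, smul_inv_smul]

end PushThrough

theorem tendsto_mul_inv_smul_add_mul_mul_mul {m n 𝕜 : Type*} [Fintype m] [Fintype n]
    [DecidableEq m] [DecidableEq n] [Field 𝕜] [TopologicalSpace 𝕜] [IsTopologicalDivisionRing 𝕜]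
    {A : Matrix n n 𝕜} {U : Matrix n m 𝕜} {C : Matrix m m 𝕜} {V : Matrix m n 𝕜}
    (hA : IsUnit A) (hC : IsUnit C) (hK : IsUnit (V * A⁻¹ * U)) :
    Tendsto (fun t : 𝕜 => V * (t • A + U * C * V)⁻¹ * U) (𝓝[≠] 0) (𝓝 C⁻¹) := by
  set K := V * A⁻¹ * U
  have hCK : (C * K).det ≠ 0 := ((isUnit_iff_isUnit_det _).1 (hC.mul hK)).ne_zero
  have hinv : ContinuousAt (Inv.inv : Matrix m m 𝕜 → Matrix m m 𝕜) (C * K) :=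
    continuousAt_matrix_inv _ (by simpa only [Ring.inverse_eq_inv'] using continuousAt_inv₀ hCK)
  have hlin : Tendsto (fun t : 𝕜 => t • (1 : Matrix m m 𝕜) + C * K) (𝓝 0) (𝓝 (C * K)) :=
    Continuous.tendsto' (by fun_prop) _ _ (by rw [zero_smul, zero_add])
  have hlim : K * (C * K)⁻¹ = C⁻¹ := by
    rw [Matrix.mul_inv_rev, mul_nonsing_inv_cancel_left _ _ ((isUnit_iff_isUnit_det K).1 hK)]
  have hcomp : Tendsto (fun t : 𝕜 => K * (t • 1 + C * K)⁻¹) (𝓝[≠] 0) (𝓝 C⁻¹) :=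
    hlim ▸ (tendsto_const_nhds.mul (hinv.tendsto.comp hlin)).mono_left nhdsWithin_le_nhds
  refine hcomp.congr' ?_
  filter_upwards [self_mem_nhdsWithin] with t ht
  exact (mul_inv_smul_add_mul_mul_mul hA U C V (Units.mk0 t ht)).symm

theorem vecMul_fromCols_one_injective {m n R : Type*} [Fintype m] [DecidableEq m] [Semiring R]
    (B : Matrix m n R) : Function.Injective (fromCols (1 : Matrix m m R) B).vecMul := by
  intro v w hvw
  simp only [vecMul_fromCols, vecMul_one] at hvw
  exact (Sum.elim_eq_iff.1 hvw).1

open scoped ComplexOrder in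
theorem zero_noise_concentration_regularized_inverse_general {m n 𝕜 : Type*} [RCLike 𝕜]
    [Fintype m] [Fintype n] [DecidableEq m] [DecidableEq n]
    {z : Matrix m m 𝕜} (hz : z.PosDef) {S : Matrix n n 𝕜} (hS : S.PosDef)
    {P : Matrix m n 𝕜} (hP : Function.Injective P.vecMul) :
    (∀ ε : ℝ, 0 < ε → (ε • S + Pᴴ * z * P).PosDef) ∧
      Tendsto (fun ε : ℝ => P * (ε • S + Pᴴ * z * P)⁻¹ * Pᴴ) (𝓝[≠] 0) (𝓝 z⁻¹) := by
  refine ⟨fun ε hε => (hS.smul hε).add_posSemidef (hz.posSemidef.conjTranspose_mul_mul_same P), ?_⟩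
  have hlim : Tendsto (fun t : 𝕜 => P * (t • S + Pᴴ * z * P)⁻¹ * Pᴴ) (𝓝[≠] 0) (𝓝 z⁻¹) :=
    tendsto_mul_inv_smul_add_mul_mul_mul hS.isUnit hz.isUnit
      (hS.inv.mul_mul_conjTranspose_same hP).isUnit
  have hofReal : Tendsto (RCLike.ofReal : ℝ → 𝕜) (𝓝[≠] 0) (𝓝[≠] 0) :=
    (RCLike.continuous_ofReal.tendsto' 0 0 RCLike.ofReal_zero).inf
      (tendsto_principal_principal.2 fun _ => RCLike.ofReal_ne_zero.2)
  simpa only [Function.comp_def, ← RCLike.real_smul_eq_coe_smul] using hlim.comp hofReal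

/-- Zero-noise concentration of the regularized inverse: for every `ε > 0` the matrix
`ε·Σ̄ + Pᵀ·z·P` is positive definite, and `P·(ε·Σ̄ + Pᵀ·z·P)⁻¹·Pᵀ → z⁻¹` as `ε → 0⁺`,
where `P = [1, 0]`. -/
theorem zero_noise_concentration_regularized_inverse
    {c r : Type*} [Fintype c] [Fintype r] [DecidableEq c] [DecidableEq r]
    [Nonempty c] [Nonempty r]
    (z : Matrix c c ℝ) (hz : z.PosDef)
    (Sb : Matrix (c ⊕ r) (c ⊕ r) ℝ) (hSb : Sb.PosDef)
    (P : Matrix c (c ⊕ r) ℝ) (hP : P = fromCols (1 : Matrix c c ℝ) (0 : Matrix c r ℝ)) :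
    (∀ ε : ℝ, 0 < ε → (ε • Sb + Pᵀ * z * P).PosDef) ∧
      Tendsto (fun ε : ℝ => P * (ε • Sb + Pᵀ * z * P)⁻¹ * Pᵀ)
        (nhdsWithin 0 (Set.Ioi 0)) (nhds z⁻¹) := by
  have hlim := zero_noise_concentration_regularized_inverse_general hz hSb
    (hP ▸ vecMul_fromCols_one_injective 0)
  exact hlim.imp_right fun h => h.mono_left (nhdsGT_le_nhdsNE 0)
end
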